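/- For every real number x with 0 ≤ x < 1, the limit inferior as n → ∞ of (p_{n+1}^x - p_n^x) equals 0, where p_n denotes the n-th prime number. -/

import Mathlib

/-- `nthPrime n` is the `n`-th prime number with 1-based indexing:
`nthPrime 1 = 2`, `nthPrime 2 = 3`, `nthPrime 3 = 5`, ... -/
noncomputable def nthPrime (n : ℕ) : ℕ := Nat.nth Nat.Prime (n - 1)

theorem not_summable_inv_nth_prime :
    ¬ Summable (fun n : ℕ => (1 : ℝ) / (Nat.nth Nat.Prime n : ℝ)) := by
  intro h
  apply not_summable_one_div_on_primes
  have hinj := Nat.nth_injective Nat.infinite_setOfPred_prime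
  refine (hinj.summable_iff ?_).mp ?_
  · intro y hy
    rw [Nat.range_nth_of_infinite Nat.infinite_setOfPred_prime] at hy
    exact Set.indicator_of_notMem hy _
  · refine h.congr fun n => ?_
    have : Nat.nth Nat.Prime n ∈ {p : ℕ | p.Prime} := Nat.prime_nth_prime n
    simp only [Function.comp]
    rw [Set.indicator_of_mem this]

theorem gap_aux (x : ℝ) (hx0 : 0 ≤ x) (hx1 : x < 1) (ε : ℝ) (hε : 0 < ε) (N : ℕ)
    (h : ∀ n ≥ N, ε ≤ (nthPrime (n + 1) : ℝ) ^ x - (nthPrime n : ℝ) ^ x) : False := by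
  rcases hx0.eq_or_lt with rfl | hx
  · have := h N le_rfl
    simp at this
    linarith
  have key : ∀ k : ℕ, ε * k ≤ (nthPrime (N + k) : ℝ) ^ x := by
    intro k
    induction k with
    | zero => simp; positivity
    | succ k ih =>
      have := h (N + k) (by omega)
      push_cast
      rw [← add_assoc]
      linarith
  apply not_summable_inv_nth_prime
  rw [← summable_nat_add_iff N]
  have hs : Summable (fun k : ℕ => ((ε : ℝ) ^ (1 / x))⁻¹ * (((k + 1 : ℕ) : ℝ) ^ (1 / x))⁻¹) := by
    apply Summable.mul_left
    have h1 : Summable (fun k : ℕ => ((k : ℝ) ^ (1 / x))⁻¹) :=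
      Real.summable_nat_rpow_inv.mpr (by rw [lt_div_iff₀ hx]; linarith)
    exact (summable_nat_add_iff 1).mpr h1
  refine Summable.of_nonneg_of_le (fun _ => by positivity) (fun k => ?_) hs
  have hk := key (k + 1)
  have he : nthPrime (N + (k + 1)) = Nat.nth Nat.Prime (k + N) := by
    unfold nthPrime
    congr 1
    omega
  rw [he] at hk
  rw [← mul_inv, ← Real.mul_rpow hε.le (by positivity), one_div]
  apply inv_anti₀ (by positivity)
  have := Real.rpow_le_rpow (z := 1 / x) (by positivity) hk (by positivity)
  rwa [← Real.rpow_mul (by positivity), mul_one_div_cancel hx.ne', Real.rpow_one] at this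

/-- For every real `x` with `0 ≤ x < 1`, `liminf (p (n+1) ^ x - p n ^ x) = 0`. -/
theorem liminf_prime_power_gap (x : ℝ) (hx0 : 0 ≤ x) (hx1 : x < 1) :
    Filter.liminf
      (fun n => (nthPrime (n + 1) : ℝ) ^ x - (nthPrime n : ℝ) ^ x)
      Filter.atTop = 0 := by
  rw [Filter.liminf_eq]
  apply IsGreatest.csSup_eq
  constructor
  · refine Filter.Eventually.of_forall fun n => ?_
    rw [sub_nonneg]
    apply Real.rpow_le_rpow (by positivity) _ hx0
    have : nthPrime n ≤ nthPrime (n + 1) :=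
      (Nat.nth_strictMono Nat.infinite_setOfPred_prime).monotone (by omega)
    exact_mod_cast this
  · intro a ha
    by_contra hlt
    obtain ⟨N, hN⟩ := Filter.eventually_atTop.mp ha
    exact gap_aux x hx0 hx1 a (not_le.mp hlt) N hN
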